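/- Let G=(V,E) be a Bonnet-Myers sharp graph of diameter 2 and let x,y∈V with x∼y and d_x<d_y. Then there does not exist any z∈V∖{x,y} with x∼z and y≁z. -/

import Mathlib

open scoped Classical
open Finset

noncomputable section

/-- The degree of a vertex `x` in the graph `G`. -/
def deg {V : Type*} [Fintype V] (G : SimpleGraph V) (x : V) : ℕ :=
  (Finset.univ.filter (fun y => G.Adj x y)).card

/-- The diameter of `G`: the maximum of the combinatorial distance over all pairs of vertices. -/
def diam {V : Type*} [Fintype V] (G : SimpleGraph V) : ℕ :=
  Finset.univ.sup (fun xy : V × V => G.dist xy.1 xy.2)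

/-- The probability measure `μ_x^p` of the lazy simple random walk at `x` with idleness `p`. -/
def mu {V : Type*} [Fintype V] (G : SimpleGraph V) (p : ℝ) (x : V) : V → ℝ :=
  fun z => if z = x then p else if G.Adj x z then (1 - p) / (deg G x : ℝ) else 0

/-- The Wasserstein distance `W₁(μ₁, μ₂)` with respect to the combinatorial distance of `G`:
the infimum of the total transport cost over all transport plans from `μ₁` to `μ₂`. -/
def W1 {V : Type*} [Fintype V] (G : SimpleGraph V) (μ₁ μ₂ : V → ℝ) : ℝ :=
  sInf {c : ℝ | ∃ π : V → V → ℝ,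
    (∀ x y, 0 ≤ π x y ∧ π x y ≤ 1) ∧
    (∀ x, ∑ y, π x y = μ₁ x) ∧
    (∀ y, ∑ x, π x y = μ₂ y) ∧
    c = ∑ x, ∑ y, (G.dist x y : ℝ) * π x y}

/-- The `p`-Ollivier-Ricci curvature `κ_p(x,y) = 1 - W₁(μ_x^p, μ_y^p)`. -/
def kappa {V : Type*} [Fintype V] (G : SimpleGraph V) (p : ℝ) (x y : V) : ℝ :=
  1 - W1 G (mu G p x) (mu G p y)

/-- The Lin-Lu-Yau curvature `κ_LLY(x,y) = lim_{p→1} κ_p(x,y)/(1-p)`. -/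
def kappaLLY {V : Type*} [Fintype V] (G : SimpleGraph V) (x y : V) : ℝ :=
  Filter.limUnder (nhdsWithin 1 (Set.Iio 1)) (fun p => kappa G p x y / (1 - p))

/-- `G` is Bonnet-Myers sharp if the infimum of `κ_LLY` over the edges equals `2/diam(G)`. -/
def BMSharp {V : Type*} [Fintype V] (G : SimpleGraph V) : Prop :=
  sInf {r : ℝ | ∃ x y, G.Adj x y ∧ r = kappaLLY G x y} = 2 / (diam G : ℝ)

/-- `G` is obtained from the complete graph on its vertex set by deleting a matching
(a set of pairwise disjoint edges, encoded as a symmetric irreflexive relation in which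
every vertex has at most one partner). -/
def IsMatchingDeletionOfComplete {V : Type*} (G : SimpleGraph V) : Prop :=
  ∃ M : V → V → Prop, Symmetric M ∧ (∀ x, ¬ M x x) ∧
    (∀ x y z, M x y → M x z → y = z) ∧
    (∀ x y, G.Adj x y ↔ x ≠ y ∧ ¬ M x y)

/-- The graph `G(a,b)` on `2a+b` vertices `u_1, …, u_{2a}, v_1, …, v_b` (encoded as
`Fin (2a+b)`, with `u_i` the index `i-1` and `v_j` the index `2a+j-1`), in which two distinct
vertices are adjacent unless they form a pair `{u_{2i-1}, u_{2i}}`, i.e. `G(a,b)` is the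
complete graph `K_{2a+b}` with a matching of size `a` deleted. -/
def Gab (a b : ℕ) : SimpleGraph (Fin (2*a+b)) where
  Adj x y := x ≠ y ∧ ¬((x : ℕ) < 2*a ∧ (y : ℕ) < 2*a ∧ (x : ℕ)/2 = (y : ℕ)/2)
  symm := by
    refine ⟨?_⟩
    intro x y h
    exact ⟨h.1.symm, fun hc => h.2 ⟨hc.2.1, hc.1, hc.2.2.symm⟩⟩
  loopless := by refine ⟨?_⟩; intro x h; exact h.1 rfl

/-- The antitree `AT(a_1, …, a_N)` on the disjoint union of sets `V_1, …, V_N` with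
`|V_k| = a_k` (0-indexed here: `V_k` is `Fin (a k)` for `k : Fin N`): two distinct vertices
are adjacent iff they lie in the same set or in consecutive sets. -/
def antitree (N : ℕ) (a : Fin N → ℕ) : SimpleGraph (Σ k : Fin N, Fin (a k)) where
  Adj x y := x ≠ y ∧
    ((x.1 : ℕ) = (y.1 : ℕ) ∨ (x.1 : ℕ) + 1 = (y.1 : ℕ) ∨ (y.1 : ℕ) + 1 = (x.1 : ℕ))
  symm := by
    refine ⟨?_⟩
    intro x y h
    refine ⟨h.1.symm, ?_⟩
    rcases h.2 with h2 | h2 | h2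
    · exact Or.inl h2.symm
    · exact Or.inr (Or.inr h2)
    · exact Or.inr (Or.inl h2)
  loopless := by refine ⟨?_⟩; intro x h; exact h.1 rfl

/-!
Testing the transport between the two random walks against a function `f` that is 1-Lipschitz
for the graph distance and satisfies `f(y) - f(x) = 1` gives `κ_LLY(x,y) ≤ Δf(x) - Δf(y)`.
Apply this to the indicator of `y` together with all vertices outside the closed neighbourhood
of `x`. Among the neighbours of `x` only `y` lies in this set, and the neighbours of `y` outside
it are `x` and the `t` common neighbours, so `κ_LLY(x,y) ≤ 1 / d_x + (t + 1) / d_y`. A neighbour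
`z ≠ y` of `x` that is not adjacent to `y` forces `d_x ≥ t + 2`, hence `d_y ≥ t + 3`, and the
bound drops below `1`, whereas every edge of a Bonnet-Myers sharp graph of diameter 2 has
curvature at least `1`.
-/

lemma indicator_sub_indicator_le_dist {V : Type*} {G : SimpleGraph V} (S : Set V) {v w : V}
    (h : G.Reachable v w) :
    S.indicator (1 : V → ℝ) w - S.indicator 1 v ≤ G.dist v w := by
  rcases eq_or_ne v w with rfl | hvw
  · simp
  · have hdist : (1 : ℝ) ≤ G.dist v w := by exact_mod_cast h.pos_dist_of_ne hvw
    have hw : S.indicator (1 : V → ℝ) w ≤ 1 := Set.indicator_le_self' (by simp) w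
    have hv : 0 ≤ S.indicator (1 : V → ℝ) v := Set.indicator_nonneg (by simp) v
    linarith

section Curvature

variable {V : Type*} [Fintype V] {G : SimpleGraph V} {μ ν : V → ℝ} {p : ℝ} {x y : V}

/-- A transport plan (coupling) from `μ` to `ν`, with the entries bounded as in `W1`. -/
structure IsTransportPlan (μ ν : V → ℝ) (π : V → V → ℝ) : Prop where
  nonneg : ∀ v w, 0 ≤ π v w
  le_one : ∀ v w, π v w ≤ 1
  sum_right : ∀ v, ∑ w, π v w = μ v
  sum_left : ∀ w, ∑ v, π v w = ν w

/-- The cost of the transport plan `π` with respect to the graph distance: the quantity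
minimized in `W1`. -/
def transportCost (G : SimpleGraph V) (π : V → V → ℝ) : ℝ :=
  ∑ v, ∑ w, (G.dist v w : ℝ) * π v w

/-- The random walk Laplacian `Δf(x) = (1 / d_x) ∑_{z ∼ x} (f(z) - f(x))`, which expresses
the change of `f` under one step of the walk. It is `0` at an isolated vertex. -/
def walkLaplacian (G : SimpleGraph V) (f : V → ℝ) (x : V) : ℝ :=
  (∑ z ∈ G.neighborFinset x, (f z - f x)) / deg G x

lemma isTransportPlan_mul (hμ : μ ∈ stdSimplex ℝ V) (hν : ν ∈ stdSimplex ℝ V) :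
    IsTransportPlan μ ν fun v w => μ v * ν w where
  nonneg v w := mul_nonneg (hμ.1 v) (hν.1 w)
  le_one v w := mul_le_one₀ (mem_Icc_of_mem_stdSimplex hμ v).2 (hν.1 w)
    (mem_Icc_of_mem_stdSimplex hν w).2
  sum_right v := by rw [← mul_sum, hν.2, mul_one]
  sum_left w := by rw [← sum_mul, hμ.2, one_mul]

lemma IsTransportPlan.convexComb {μ' ν' : V → ℝ} {π π' : V → V → ℝ} {a b : ℝ}
    (hπ : IsTransportPlan μ ν π) (hπ' : IsTransportPlan μ' ν' π')
    (ha : 0 ≤ a) (hb : 0 ≤ b) (hab : a + b = 1) :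
    IsTransportPlan (a • μ + b • μ') (a • ν + b • ν') (a • π + b • π') where
  nonneg v w := add_nonneg (mul_nonneg ha (hπ.nonneg v w)) (mul_nonneg hb (hπ'.nonneg v w))
  le_one v w := by
    simpa [hab] using add_le_add (mul_le_mul_of_nonneg_left (hπ.le_one v w) ha)
      (mul_le_mul_of_nonneg_left (hπ'.le_one v w) hb)
  sum_right v := by simp [sum_add_distrib, ← mul_sum, hπ.sum_right, hπ'.sum_right]
  sum_left w := by simp [sum_add_distrib, ← mul_sum, hπ.sum_left, hπ'.sum_left]

lemma transportCost_nonneg {π : V → V → ℝ} (hπ : ∀ v w, 0 ≤ π v w) : 0 ≤ transportCost G π :=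
  sum_nonneg fun v _ => sum_nonneg fun w _ => mul_nonneg (Nat.cast_nonneg _) (hπ v w)

lemma transportCost_smul_add_smul (π π' : V → V → ℝ) (a b : ℝ) :
    transportCost G (a • π + b • π') = a * transportCost G π + b * transportCost G π' := by
  simp only [transportCost, Pi.add_apply, Pi.smul_apply, smul_eq_mul, mul_sum,
    ← sum_add_distrib, mul_add, mul_left_comm]

lemma W1_eq_iInf (G : SimpleGraph V) (μ ν : V → ℝ) :
    W1 G μ ν = ⨅ π : {π // IsTransportPlan μ ν π}, transportCost G π := by
  refine congrArg sInf (Set.ext fun c => ⟨?_, ?_⟩)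
  · rintro ⟨π, hπ, hμ, hν, rfl⟩
    exact ⟨⟨π, fun v w => (hπ v w).1, fun v w => (hπ v w).2, hμ, hν⟩, rfl⟩
  · rintro ⟨⟨π, hπ⟩, rfl⟩
    exact ⟨π, fun v w => ⟨hπ.nonneg v w, hπ.le_one v w⟩, hπ.sum_right, hπ.sum_left, rfl⟩

lemma IsTransportPlan.W1_le {π : V → V → ℝ} (hπ : IsTransportPlan μ ν π) :
    W1 G μ ν ≤ transportCost G π := by
  rw [W1_eq_iInf]
  refine ciInf_le ⟨0, ?_⟩ (⟨π, hπ⟩ : {π // IsTransportPlan μ ν π})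
  rintro _ ⟨π', rfl⟩
  exact transportCost_nonneg π'.2.nonneg

lemma convexOn_W1 (G : SimpleGraph V) :
    ConvexOn ℝ (stdSimplex ℝ V ×ˢ stdSimplex ℝ V) fun m => W1 G m.1 m.2 := by
  refine ⟨(convex_stdSimplex ℝ V).prod (convex_stdSimplex ℝ V), ?_⟩
  rintro ⟨μ, ν⟩ ⟨hμ, hν⟩ ⟨μ', ν'⟩ ⟨hμ', hν'⟩ a b ha hb hab
  have : Nonempty {π // IsTransportPlan μ ν π} := ⟨⟨_, isTransportPlan_mul hμ hν⟩⟩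
  have : Nonempty {π // IsTransportPlan μ' ν' π} := ⟨⟨_, isTransportPlan_mul hμ' hν'⟩⟩
  simp only [smul_eq_mul]
  rw [W1_eq_iInf G μ ν, W1_eq_iInf G μ' ν', Real.mul_iInf_of_nonneg ha,
    Real.mul_iInf_of_nonneg hb]
  refine le_ciInf_add_ciInf fun π π' => ?_
  rw [← transportCost_smul_add_smul]
  exact (π.2.convexComb π'.2 ha hb hab).W1_le

lemma W1_single_single_le (G : SimpleGraph V) (x y : V) :
    W1 G (Pi.single x 1) (Pi.single y 1) ≤ G.dist x y := by
  have hπ := isTransportPlan_mul (single_mem_stdSimplex ℝ x) (single_mem_stdSimplex ℝ y)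
  refine hπ.W1_le.trans_eq ?_
  simp [transportCost, Pi.single_apply]

lemma IsTransportPlan.sum_sub_sum {π : V → V → ℝ} (hπ : IsTransportPlan μ ν π) (f : V → ℝ) :
    ∑ w, ν w * f w - ∑ v, μ v * f v = ∑ v, ∑ w, (f w - f v) * π v w := by
  have hν : ∑ w, ν w * f w = ∑ v, ∑ w, f w * π v w := by
    rw [sum_comm]
    simp only [← hπ.sum_left, mul_comm _ (f _), mul_sum]
  have hμ : ∑ v, μ v * f v = ∑ v, ∑ w, f v * π v w := by
    simp only [← hπ.sum_right, mul_comm _ (f _), mul_sum]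
  simp only [hμ, hν, ← sum_sub_distrib, sub_mul]

lemma IsTransportPlan.ne_zero_of_pos {π : V → V → ℝ} (hπ : IsTransportPlan μ ν π) {v w : V}
    (h : 0 < π v w) : μ v ≠ 0 ∧ ν w ≠ 0 := by
  constructor
  · rw [← hπ.sum_right]
    exact (sum_pos' (fun w _ => hπ.nonneg v w) ⟨w, mem_univ w, h⟩).ne'
  · rw [← hπ.sum_left]
    exact (sum_pos' (fun v _ => hπ.nonneg v w) ⟨v, mem_univ v, h⟩).ne'

lemma sum_sub_sum_le_W1 (hμ : μ ∈ stdSimplex ℝ V) (hν : ν ∈ stdSimplex ℝ V) {f : V → ℝ}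
    (hf : ∀ v w, μ v ≠ 0 → ν w ≠ 0 → f w - f v ≤ G.dist v w) :
    ∑ w, ν w * f w - ∑ v, μ v * f v ≤ W1 G μ ν := by
  have : Nonempty {π // IsTransportPlan μ ν π} := ⟨⟨_, isTransportPlan_mul hμ hν⟩⟩
  rw [W1_eq_iInf]
  refine le_ciInf fun ⟨π, hπ⟩ => ?_
  rw [hπ.sum_sub_sum f]
  refine sum_le_sum fun v _ => sum_le_sum fun w _ => ?_
  rcases (hπ.nonneg v w).eq_or_lt with h | h
  · simp [← h]
  · obtain ⟨hv, hw⟩ := hπ.ne_zero_of_pos h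
    exact mul_le_mul_of_nonneg_right (hf v w hv hw) h.le

lemma card_neighborFinset_eq_deg (G : SimpleGraph V) (x : V) :
    #(G.neighborFinset x) = deg G x := by
  rw [SimpleGraph.neighborFinset_eq_filter, deg]

lemma deg_pos (h : G.Adj x y) : 0 < deg G x :=
  card_pos.mpr ⟨y, by simpa using h⟩

lemma sum_mu_mul (hx : deg G x ≠ 0) (p : ℝ) (f : V → ℝ) :
    ∑ z, mu G p x z * f z = f x + (1 - p) * walkLaplacian G f x := by
  have hmu : ∀ z, mu G p x z * f z =
      (if z = x then p * f x else 0) +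
        if G.Adj x z then (1 - p) / deg G x * f z else 0 := by
    intro z
    by_cases hz : z = x <;> simp [mu, hz]
  have hx' : (deg G x : ℝ) ≠ 0 := Nat.cast_ne_zero.mpr hx
  simp only [hmu, sum_add_distrib, sum_ite_eq', mem_univ, if_true, walkLaplacian,
    ← sum_filter, ← SimpleGraph.neighborFinset_eq_filter, ← mul_sum, sum_sub_distrib,
    sum_const, card_neighborFinset_eq_deg, nsmul_eq_mul]
  field_simp
  ring

lemma mu_mem_stdSimplex (hp : p ∈ Set.Icc 0 1) (hx : deg G x ≠ 0) :
    mu G p x ∈ stdSimplex ℝ V := by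
  constructor
  · intro z
    have hp' : 0 ≤ 1 - p := sub_nonneg.mpr hp.2
    unfold mu
    split_ifs
    exacts [hp.1, by positivity, le_rfl]
  · simpa [walkLaplacian] using sum_mu_mul hx p 1

lemma mu_one (G : SimpleGraph V) (x : V) : mu G 1 x = Pi.single x 1 := by
  ext z
  simp [mu, Pi.single_apply]

lemma mu_convexComb (G : SimpleGraph V) (x : V) {a b : ℝ} (hab : a + b = 1) (p q : ℝ) :
    mu G (a * p + b * q) x = a • mu G p x + b • mu G q x := by
  ext z
  simp only [mu, Pi.add_apply, Pi.smul_apply, smul_eq_mul]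
  split_ifs
  · rfl
  · linear_combination (-(deg G x : ℝ)⁻¹) * hab
  · simp

lemma reachable_of_mu_ne_zero {z : V} (h : mu G p x z ≠ 0) : G.Reachable x z := by
  by_cases hz : z = x
  · exact hz ▸ .rfl
  · by_cases hxz : G.Adj x z
    · exact hxz.reachable
    · simp [mu, hz, hxz] at h

lemma concaveOn_kappa (hx : deg G x ≠ 0) (hy : deg G y ≠ 0) :
    ConcaveOn ℝ (Set.Icc 0 1) fun p => kappa G p x y := by
  refine ⟨convex_Icc 0 1, fun p hp q hq a b ha hb hab => ?_⟩
  have hW : W1 G (mu G (a * p + b * q) x) (mu G (a * p + b * q) y) ≤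
      a * W1 G (mu G p x) (mu G p y) + b * W1 G (mu G q x) (mu G q y) := by
    rw [mu_convexComb G x hab, mu_convexComb G y hab]
    exact (convexOn_W1 G).2 (x := (mu G p x, mu G p y)) (y := (mu G q x, mu G q y))
      ⟨mu_mem_stdSimplex hp hx, mu_mem_stdSimplex hp hy⟩
      ⟨mu_mem_stdSimplex hq hx, mu_mem_stdSimplex hq hy⟩ ha hb hab
  simp only [kappa, smul_eq_mul]
  linarith

lemma kappa_one_nonneg (hxy : G.Adj x y) : 0 ≤ kappa G 1 x y := by
  have h := W1_single_single_le G x y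
  rw [SimpleGraph.dist_eq_one_iff_adj.mpr hxy, Nat.cast_one] at h
  simpa [kappa, mu_one] using h

lemma monotoneOn_kappa_div (hxy : G.Adj x y) :
    MonotoneOn (fun p => kappa G p x y / (1 - p)) (Set.Ico 0 1) := by
  intro p hp q hq hpq
  have hp' : 0 < 1 - p := sub_pos.mpr hp.2
  have hq' : 0 < 1 - q := sub_pos.mpr hq.2
  have ht : (1 - q) / (1 - p) ≤ 1 := (div_le_one hp').mpr (by linarith)
  have hqt : (1 - q) / (1 - p) * p + (1 - (1 - q) / (1 - p)) * 1 = q := by field_simp; ring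
  have hconc := (concaveOn_kappa (deg_pos hxy).ne' (deg_pos hxy.symm).ne').2
    (Set.Ico_subset_Icc_self hp) (Set.right_mem_Icc.mpr zero_le_one)
    (div_nonneg hq'.le hp'.le) (sub_nonneg.mpr ht) (add_sub_cancel _ _)
  simp only [smul_eq_mul, hqt] at hconc
  change kappa G p x y / (1 - p) ≤ kappa G q x y / (1 - q)
  rw [le_div_iff₀ hq']
  calc kappa G p x y / (1 - p) * (1 - q)
      = (1 - q) / (1 - p) * kappa G p x y := by ring
    _ ≤ (1 - q) / (1 - p) * kappa G p x y + (1 - (1 - q) / (1 - p)) * kappa G 1 x y :=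
        le_add_of_nonneg_right (mul_nonneg (sub_nonneg.mpr ht) (kappa_one_nonneg hxy))
    _ ≤ kappa G q x y := hconc

-- Without convergence `limUnder` is a junk value; here the quotient converges because it is
-- monotone in `p` and bounded above by `K`.
lemma kappaLLY_le (hxy : G.Adj x y) {K : ℝ}
    (hK : ∀ p ∈ Set.Ioo (0 : ℝ) 1, kappa G p x y ≤ (1 - p) * K) : kappaLLY G x y ≤ K := by
  have hle : ∀ c ∈ (fun p => kappa G p x y / (1 - p)) '' Set.Ioo 0 1, c ≤ K := by
    rintro _ ⟨p, hp, rfl⟩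
    exact (div_le_iff₀' (sub_pos.mpr hp.2)).mpr (hK p hp)
  have hlim := ((monotoneOn_kappa_div hxy).mono
    Set.Ioo_subset_Ico_self).tendsto_nhdsWithin_Ioo_left (Set.nonempty_Ioo.mpr one_pos) ⟨K, hle⟩
  exact hlim.limUnder_eq.trans_le (csSup_le ((Set.nonempty_Ioo.mpr one_pos).image _) hle)

lemma kappaLLY_le_walkLaplacian_sub (hxy : G.Adj x y) {f : V → ℝ}
    (hf : ∀ v w, G.Reachable v w → f w - f v ≤ G.dist v w) (hfxy : f y - f x = 1) :
    kappaLLY G x y ≤ walkLaplacian G f x - walkLaplacian G f y := by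
  refine kappaLLY_le hxy fun p hp => ?_
  have hp' := Set.Ioo_subset_Icc_self hp
  have hx := (deg_pos hxy).ne'
  have hy := (deg_pos hxy.symm).ne'
  have hW := sum_sub_sum_le_W1 (G := G) (mu_mem_stdSimplex hp' hx) (mu_mem_stdSimplex hp' hy)
    fun v w hv hw => hf v w <| (reachable_of_mu_ne_zero hv).symm.trans <|
      hxy.reachable.trans (reachable_of_mu_ne_zero hw)
  rw [sum_mu_mul hx, sum_mu_mul hy] at hW
  rw [kappa]
  linarith

lemma walkLaplacian_indicator_of_notMem {S : Finset V} (hx : x ∉ S) :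
    walkLaplacian G ((S : Set V).indicator 1) x = #(G.neighborFinset x ∩ S) / deg G x := by
  simp [walkLaplacian, Set.indicator_apply, hx]

lemma walkLaplacian_indicator_of_mem {S : Finset V} (hx : x ∈ S) :
    walkLaplacian G ((S : Set V).indicator 1) x = -(#(G.neighborFinset x \ S) / deg G x) := by
  have hS : ∀ z, (S : Set V).indicator (1 : V → ℝ) z - (S : Set V).indicator 1 x =
      -(if z ∉ S then 1 else 0) := fun z => by by_cases hz : z ∈ S <;> simp [hx, hz]
  simp only [walkLaplacian, hS, sum_neg_distrib, sum_boole, ← sdiff_eq_filter, neg_div]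

lemma kappaLLY_le_of_cut (hxy : G.Adj x y) {S : Finset V} (hx : x ∉ S) (hy : y ∈ S) :
    kappaLLY G x y ≤
      #(G.neighborFinset x ∩ S) / deg G x + #(G.neighborFinset y \ S) / deg G y := by
  have h := kappaLLY_le_walkLaplacian_sub hxy
    (fun v w => indicator_sub_indicator_le_dist (S : Set V)) (by simp [hx, hy])
  rwa [walkLaplacian_indicator_of_notMem hx, walkLaplacian_indicator_of_mem hy,
    sub_neg_eq_add] at h

lemma kappaLLY_le_card_common_neighbors (hxy : G.Adj x y) :
    kappaLLY G x y ≤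
      1 / deg G x + (#(G.neighborFinset x ∩ G.neighborFinset y) + 1) / deg G y := by
  set S := insert y (insert x (G.neighborFinset x))ᶜ with hS
  have hcut := kappaLLY_le_of_cut hxy (S := S) (by simp [hS, hxy.ne]) (mem_insert_self _ _)
  have hNx : G.neighborFinset x ∩ S = {y} := by
    ext w
    simp only [hS, mem_inter, mem_insert, mem_compl, SimpleGraph.mem_neighborFinset,
      mem_singleton]
    grind
  have hNy : G.neighborFinset y \ S = insert x (G.neighborFinset x ∩ G.neighborFinset y) := by
    ext w
    have hyx := hxy.symm
    have hyy := G.irrefl (v := y)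
    simp only [hS, mem_sdiff, mem_inter, mem_insert, mem_compl, SimpleGraph.mem_neighborFinset]
    grind
  rw [hNx, hNy, card_singleton, card_insert_of_notMem (by simp)] at hcut
  exact_mod_cast hcut

lemma BMSharp.two_div_diam_le_kappaLLY (h : BMSharp G) (hxy : G.Adj x y) :
    2 / (diam G : ℝ) ≤ kappaLLY G x y := by
  have hfin : {r : ℝ | ∃ x y, G.Adj x y ∧ r = kappaLLY G x y}.Finite := by
    refine (Set.finite_range fun e : V × V => kappaLLY G e.1 e.2).subset ?_
    rintro _ ⟨u, v, -, rfl⟩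
    exact ⟨(u, v), rfl⟩
  rw [← h]
  exact csInf_le hfin.bddBelow ⟨x, y, hxy, rfl⟩

lemma card_common_neighbors_add_two_le {z : V} (hxy : G.Adj x y) (hxz : G.Adj x z)
    (hzy : z ≠ y) (hyz : ¬ G.Adj y z) :
    #(G.neighborFinset x ∩ G.neighborFinset y) + 2 ≤ deg G x := by
  rw [← card_neighborFinset_eq_deg, ← card_pair hzy, ← card_union_of_disjoint (by simp [hyz])]
  refine card_le_card (union_subset inter_subset_left ?_)
  simp [insert_subset_iff, hxy, hxz]

theorem stmt7_general (hxy : G.Adj x y) (hκ : 1 ≤ kappaLLY G x y) (hdeg : deg G x < deg G y)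
    {z : V} (hzy : z ≠ y) (hxz : G.Adj x z) : G.Adj y z := by
  by_contra hyz
  set t := #(G.neighborFinset x ∩ G.neighborFinset y)
  have hx : t + 2 ≤ deg G x := card_common_neighbors_add_two_le hxy hxz hzy hyz
  have hy : t + 3 ≤ deg G y := by omega
  have hlt : kappaLLY G x y < 1 := calc
    kappaLLY G x y ≤ 1 / deg G x + (t + 1) / deg G y := kappaLLY_le_card_common_neighbors hxy
    _ ≤ 1 / (t + 2) + (t + 1) / (t + 3) := by
      gcongr
      exacts [mod_cast hx, mod_cast hy]
    _ < 1 := by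
      rw [div_add_div _ _ (by positivity) (by positivity), div_lt_one (by positivity)]
      nlinarith
  exact hlt.not_ge hκ

end Curvature

/-- In a Bonnet-Myers sharp graph of diameter 2, if `x ∼ y` and `d_x < d_y`, then
there is no vertex `z ∉ {x,y}` with `x ∼ z` and `y ≁ z`. -/
theorem stmt7 {V : Type*} [Fintype V] (G : SimpleGraph V) (hconn : G.Connected)
    (hdiam : diam G = 2) (hBM : BMSharp G) (x y : V) (hxy : G.Adj x y)
    (hdeg : deg G x < deg G y) :
    ¬ ∃ z : V, z ≠ x ∧ z ≠ y ∧ G.Adj x z ∧ ¬ G.Adj y z := by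
  rintro ⟨z, -, hzy, hxz, hyz⟩
  have hκ : 1 ≤ kappaLLY G x y := by simpa [hdiam] using hBM.two_div_diam_le_kappaLLY hxy
  exact hyz (stmt7_general hxy hκ hdeg hzy hxz)
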